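/- Let α ∈ (0,π), γ ∈ [0,π/2], B = (sin γ·cos(α/2), sin γ·sin(α/2), cos γ) = (b₁,b₂,b₃), and τ ∈ ℝ. Let Hp^up := {(x₁,x₂) ∈ ℝ² : x₂ < x₁·tan(α/2)}. Then the infimum, over all smooth compactly supported u : ℝ² → ℂ with ∫_{Hp^up}|u|² > 0, of (∫_{Hp^up} |(−i∂₁ + x₂b₃)u|² + |∂₂u|² + (x₁b₂ − x₂b₁ − τ)²|u|² dx)/(∫_{Hp^up}|u|² dx) equals inf_{ξ∈ℝ} ( μ₁(ξ·cos γ + τ·sin γ) + (ξ·sin γ − τ·cos γ)² ). -/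

import Mathlib

open Real MeasureTheory Set Filter

noncomputable section

namespace MagWedge

/-- The infinite sector `S_α := {(x₁,x₂) : |x₂| ≤ x₁·tan(α/2)}`. -/
def sector (α : ℝ) : Set (ℝ × ℝ) :=
  {x | |x.2| ≤ x.1 * Real.tan (α / 2)}

/-- The infinite wedge `W_α := S_α × ℝ` (coordinates `(x₁, x₂, x₃)`). -/
def wedge (α : ℝ) : Set (ℝ × ℝ × ℝ) :=
  {x | |x.2.1| ≤ x.1 * Real.tan (α / 2)}

/-- The upper half-plane `Hp^up := {x₂ < x₁·tan(α/2)}`. -/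
def hpUp (α : ℝ) : Set (ℝ × ℝ) :=
  {x | x.2 < x.1 * Real.tan (α / 2)}

/-- The lower half-plane `Hp^low := {x₂ > −x₁·tan(α/2)}`. -/
def hpLow (α : ℝ) : Set (ℝ × ℝ) :=
  {x | -(x.1 * Real.tan (α / 2)) < x.2}

/-- The magnetic/electric energy of `u` on a planar domain `Ω`, for magnetic field
`(b₁,b₂,b₃)` (gauge `A̲ = (−x₂ b₃, 0)`) and Fourier parameter `τ`. -/
def energy2D (Ω : Set (ℝ × ℝ)) (b1 b2 b3 τ : ℝ) (u : ℝ × ℝ → ℂ) : ℝ :=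
  ∫ x in Ω,
    ‖(-Complex.I) * fderiv ℝ u x (1, 0) + ((x.2 * b3 : ℝ) : ℂ) * u x‖ ^ 2
      + ‖fderiv ℝ u x (0, 1)‖ ^ 2
      + (x.1 * b2 - x.2 * b1 - τ) ^ 2 * ‖u x‖ ^ 2

/-- The squared `L²`-norm of `u` on a planar domain `Ω`. -/
def norm2D (Ω : Set (ℝ × ℝ)) (u : ℝ × ℝ → ℂ) : ℝ := ∫ x in Ω, ‖u x‖ ^ 2

/-- The bottom of the spectrum of the Neumann realization of
`(−i∇−A̲)² + (x₁b₂−x₂b₁−τ)²` on `Ω`, via the Rayleigh quotient. -/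
def specInf2D (Ω : Set (ℝ × ℝ)) (b1 b2 b3 τ : ℝ) : ℝ :=
  sInf { r : ℝ | ∃ u : ℝ × ℝ → ℂ, ContDiff ℝ (⊤ : ℕ∞) u ∧ HasCompactSupport u ∧
    0 < norm2D Ω u ∧ r = energy2D Ω b1 b2 b3 τ u / norm2D Ω u }

/-- The band function `s(B;α,τ)` on the sector `S_α`. -/
def bandFn (α b1 b2 b3 τ : ℝ) : ℝ := specInf2D (sector α) b1 b2 b3 τ

/-- `Σ(B;α,τ,R)` : the Rayleigh quotient infimum over functions supported outside the
(closed Euclidean) ball of radius `R` centered at the origin. -/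
def SigmaR (α b1 b2 b3 τ R : ℝ) : ℝ :=
  sInf { r : ℝ | ∃ u : ℝ × ℝ → ℂ, ContDiff ℝ (⊤ : ℕ∞) u ∧ HasCompactSupport u ∧
    (tsupport u ⊆ {x : ℝ × ℝ | R ^ 2 < x.1 ^ 2 + x.2 ^ 2}) ∧
    0 < norm2D (sector α) u ∧
    r = energy2D (sector α) b1 b2 b3 τ u / norm2D (sector α) u }

/-- The bottom of the essential spectrum via Persson's characterization:
`s_ess(B;α,τ) = sup_{R>0} Σ(B;α,τ,R)`. -/
def sEss (α b1 b2 b3 τ : ℝ) : ℝ :=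
  sSup { r : ℝ | ∃ R > (0 : ℝ), r = SigmaR α b1 b2 b3 τ R }

/-- The 3D magnetic energy on a domain `Ω ⊆ ℝ³` for the constant field `(b₁,b₂,b₃)`,
in the gauge `A = (−x₂b₃, 0, x₂b₁ − x₁b₂)`. -/
def energy3D (Ω : Set (ℝ × ℝ × ℝ)) (b1 b2 b3 : ℝ) (u : ℝ × ℝ × ℝ → ℂ) : ℝ :=
  ∫ x in Ω,
    ‖(-Complex.I) * fderiv ℝ u x (1, 0, 0) + ((x.2.1 * b3 : ℝ) : ℂ) * u x‖ ^ 2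
      + ‖fderiv ℝ u x (0, 1, 0)‖ ^ 2
      + ‖(-Complex.I) * fderiv ℝ u x (0, 0, 1) - ((x.2.1 * b1 : ℝ) : ℂ) * u x
          + ((x.1 * b2 : ℝ) : ℂ) * u x‖ ^ 2

/-- The squared `L²`-norm of `u` on a domain `Ω ⊆ ℝ³`. -/
def norm3D (Ω : Set (ℝ × ℝ × ℝ)) (u : ℝ × ℝ × ℝ → ℂ) : ℝ := ∫ x in Ω, ‖u x‖ ^ 2

/-- `λ(B;W_α)` : the bottom of the spectrum of the Neumann magnetic Laplacian on the
wedge `W_α` with constant magnetic field `B = (b₁,b₂,b₃)`. -/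
def lambdaWedge (α b1 b2 b3 : ℝ) : ℝ :=
  sInf { r : ℝ | ∃ u : ℝ × ℝ × ℝ → ℂ, ContDiff ℝ (⊤ : ℕ∞) u ∧ HasCompactSupport u ∧
    0 < norm3D (wedge α) u ∧ r = energy3D (wedge α) b1 b2 b3 u / norm3D (wedge α) u }

/-- The de Gennes function `μ₁(ξ)`: bottom of the spectrum of the Neumann realization of
`−d²/dt² + (t−ξ)²` on the half-line. -/
def deGennes (ξ : ℝ) : ℝ :=
  sInf { r : ℝ | ∃ u : ℝ → ℂ, ContDiff ℝ (⊤ : ℕ∞) u ∧ HasCompactSupport u ∧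
    (0 < ∫ t in Ioi (0 : ℝ), ‖u t‖ ^ 2) ∧
    r = (∫ t in Ioi (0 : ℝ), ‖deriv u t‖ ^ 2 + (t - ξ) ^ 2 * ‖u t‖ ^ 2) /
        (∫ t in Ioi (0 : ℝ), ‖u t‖ ^ 2) }

/-- `Θ₀ := inf_ξ μ₁(ξ)`. -/
def Theta0 : ℝ := ⨅ ξ : ℝ, deGennes ξ

/-- The half-space `{(s,t,z) : t > 0}` in ℝ³. -/
def halfSpace3 : Set (ℝ × ℝ × ℝ) := {x | 0 < x.2.1}

/-- `σ(θ)` : the bottom of the spectrum of the Neumann magnetic Laplacian on the half-space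
with a unit magnetic field making angle `θ` with the boundary. -/
def sigmaHS (θ : ℝ) : ℝ :=
  sInf { r : ℝ | ∃ u : ℝ × ℝ × ℝ → ℂ, ContDiff ℝ (⊤ : ℕ∞) u ∧ HasCompactSupport u ∧
    (0 < ∫ x in halfSpace3, ‖u x‖ ^ 2) ∧
    r = (∫ x in halfSpace3,
          ‖fderiv ℝ u x (1, 0, 0)‖ ^ 2 + ‖fderiv ℝ u x (0, 1, 0)‖ ^ 2
            + ‖(-Complex.I) * fderiv ℝ u x (0, 0, 1)
                - ((x.2.1 * Real.cos θ : ℝ) : ℂ) * u x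
                + ((x.1 * Real.sin θ : ℝ) : ℂ) * u x‖ ^ 2) /
        (∫ x in halfSpace3, ‖u x‖ ^ 2) }

/-- `μ(α)` : the bottom of the spectrum of the magnetic Neumann Laplacian on the sector
`S_α` with unit constant (scalar) magnetic field. -/
def muSector (α : ℝ) : ℝ :=
  sInf { r : ℝ | ∃ u : ℝ × ℝ → ℂ, ContDiff ℝ (⊤ : ℕ∞) u ∧ HasCompactSupport u ∧
    0 < norm2D (sector α) u ∧
    r = (∫ x in sector α,
          ‖(-Complex.I) * fderiv ℝ u x (1, 0) + (x.2 : ℂ) * u x‖ ^ 2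
            + ‖fderiv ℝ u x (0, 1)‖ ^ 2) / norm2D (sector α) u }

end MagWedge

/-!
A reflection carries `Hp^up` to the half-plane `t > 0`, and a quadratic gauge brings the magnetic
potential to Landau form; the form is then invariant under translations in the boundary variable
`s`. The partial Fourier transform in `s` decomposes it into the half-line forms of
`-d²/dt² + (ξ - t cos γ)² + (t sin γ - τ)²`. As `cos² γ + sin² γ = 1`, the potential is
`(t - (ξ cos γ + τ sin γ))² + (ξ sin γ - τ cos γ)²`, so every fiber is a de Gennes operator plus a
constant, which bounds the form from below by the infimum over `ξ`. Conversely, the linear gauge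
`exp (iξs)` moves any frequency `ξ` to `0`, and there a trial state `χ(s) v(t)` with a slowly
varying cut-off `χ` costs only `∫ |χ'|² / ∫ |χ|²` more than the half-line state `v`.
-/

namespace MagWedge

open scoped ContDiff FourierTransform

/-! ### Test functions -/

section TestFunction

lemma eq_zero_of_notMem_image_fst_tsupport {X Y M : Type*} [TopologicalSpace X]
    [TopologicalSpace Y] [Zero M] {g : X × Y → M} (s : X) (t : Y)
    (hs : s ∉ Prod.fst '' tsupport g) : g (s, t) = 0 :=
  image_eq_zero_of_notMem_tsupport fun h => hs ⟨_, h, rfl⟩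

variable {E F : Type*} [NormedAddCommGroup E] [NormedSpace ℝ E] [NormedAddCommGroup F]
  [NormedSpace ℝ F]

/-- Smooth compactly supported functions: the form core on which every Rayleigh quotient of this
file is taken. -/
structure IsTestFunction (f : E → F) : Prop where
  contDiff : ContDiff ℝ ∞ f
  hasCompactSupport : HasCompactSupport f

lemma isTestFunction_iff {f : E → F} :
    IsTestFunction f ↔ ContDiff ℝ ∞ f ∧ HasCompactSupport f :=
  ⟨fun h => ⟨h.1, h.2⟩, fun h => ⟨h.1, h.2⟩⟩

namespace IsTestFunction

variable {f g : E → F}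

lemma differentiable (hf : IsTestFunction f) : Differentiable ℝ f :=
  hf.contDiff.differentiable (by simp)

lemma continuous (hf : IsTestFunction f) : Continuous f := hf.contDiff.continuous

lemma sub (hf : IsTestFunction f) (hg : IsTestFunction g) :
    IsTestFunction (fun x => f x - g x) :=
  ⟨hf.contDiff.sub hg.contDiff, hf.hasCompactSupport.sub hg.hasCompactSupport⟩

lemma fderiv_apply (hf : IsTestFunction f) (v : E) : IsTestFunction (fun x => fderiv ℝ f x v) :=
  ⟨(hf.contDiff.fderiv_right (by simp)).clm_apply contDiff_const,
    hf.hasCompactSupport.fderiv_apply (𝕜 := ℝ) v⟩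

lemma deriv {f : ℝ → F} (hf : IsTestFunction f) : IsTestFunction (deriv f) :=
  ⟨(contDiff_infty_iff_deriv.1 hf.contDiff).2, hf.hasCompactSupport.deriv⟩

lemma mul_left {A : Type*} [NormedRing A] [NormedAlgebra ℝ A] {f g : E → A}
    (hg : IsTestFunction g) (hf : ContDiff ℝ ∞ f) : IsTestFunction (fun x => f x * g x) :=
  ⟨hf.mul hg.contDiff, hg.hasCompactSupport.mul_left⟩

lemma ofReal {f : E → ℝ} (hf : IsTestFunction f) : IsTestFunction (fun x => (f x : ℂ)) :=
  ⟨Complex.ofRealCLM.contDiff.comp hf.contDiff,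
    hf.hasCompactSupport.comp_left (g := Complex.ofReal) Complex.ofReal_zero⟩

lemma comp_continuousLinearEquiv {E' : Type*} [NormedAddCommGroup E'] [NormedSpace ℝ E']
    (hf : IsTestFunction f) (L : E' ≃L[ℝ] E) : IsTestFunction (fun x => f (L x)) :=
  ⟨hf.contDiff.comp L.contDiff, hf.hasCompactSupport.comp_homeomorph L.toHomeomorph⟩

lemma mul_prod {E' A : Type*} [NormedAddCommGroup E'] [NormedSpace ℝ E'] [NormedRing A]
    [NormedAlgebra ℝ A] {f : E → A} {g : E' → A} (hf : IsTestFunction f) (hg : IsTestFunction g) :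
    IsTestFunction (fun p : E × E' => f p.1 * g p.2) where
  contDiff := (hf.contDiff.comp contDiff_fst).mul (hg.contDiff.comp contDiff_snd)
  hasCompactSupport := by
    refine .intro (hf.hasCompactSupport.isCompact.prod hg.hasCompactSupport.isCompact)
      fun p hp => ?_
    rcases not_and_or.1 (mt mem_prod.2 hp) with h | h
    · simp only [image_eq_zero_of_notMem_tsupport h, zero_mul]
    · simp only [image_eq_zero_of_notMem_tsupport h, mul_zero]

section Slice

variable {E' : Type*} [NormedAddCommGroup E'] [NormedSpace ℝ E'] {g : E × E' → F}

lemma slice (hg : IsTestFunction g) (t : E') : IsTestFunction (fun s => g (s, t)) :=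
  ⟨hg.contDiff.comp (contDiff_id.prodMk contDiff_const),
    .intro (hg.hasCompactSupport.isCompact.image continuous_fst)
      fun s => eq_zero_of_notMem_image_fst_tsupport s t⟩

end Slice

section Integrable

variable [MeasurableSpace E] [OpensMeasurableSpace E] {μ : Measure E} [IsFiniteMeasureOnCompacts μ]

lemma integrable (hf : IsTestFunction f) : Integrable f μ :=
  hf.continuous.integrable_of_hasCompactSupport hf.hasCompactSupport

lemma integrable_mul_norm_sq (hf : IsTestFunction f) {W : E → ℝ} (hW : Continuous W) :
    Integrable (fun x => W x * ‖f x‖ ^ 2) μ := by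
  have hcont : Continuous (fun x => W x * ‖f x‖ ^ 2) := hW.mul (hf.continuous.norm.pow 2)
  refine hcont.integrable_of_hasCompactSupport (hf.hasCompactSupport.mono fun x hx hx' => hx ?_)
  simp only [hx', norm_zero, ne_eq, OfNat.ofNat_ne_zero, not_false_eq_true, zero_pow, mul_zero]

lemma integrable_norm_sq (hf : IsTestFunction f) : Integrable (fun x => ‖f x‖ ^ 2) μ := by
  simpa only [one_mul] using hf.integrable_mul_norm_sq (μ := μ) (continuous_const (y := 1))

end Integrable

end IsTestFunction

lemma exists_isTestFunction_setIntegral_sq_pos [FiniteDimensional ℝ E] [MeasurableSpace E]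
    [BorelSpace E] (μ : Measure E) [IsFiniteMeasureOnCompacts μ] [μ.IsOpenPosMeasure]
    {Ω : Set E} (hΩ : IsOpen Ω) (hne : Ω.Nonempty) :
    ∃ f : E → ℝ, IsTestFunction f ∧ 0 < ∫ x in Ω, f x ^ 2 ∂μ := by
  obtain ⟨x₀, hx₀⟩ := hne
  let f : ContDiffBump x₀ := ⟨1, 2, one_pos, one_lt_two⟩
  have hf : IsTestFunction f := ⟨f.contDiff, f.hasCompactSupport⟩
  have hint : IntegrableOn (fun x => f x ^ 2) Ω μ := by
    simpa only [Real.norm_eq_abs, sq_abs] using hf.integrable_norm_sq.integrableOn (s := Ω)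
  have hpos : x₀ ∈ Function.support (fun x => f x ^ 2) ∩ Ω :=
    ⟨by simp [f.one_of_mem_closedBall (Metric.mem_closedBall_self f.rIn_pos.le)], hx₀⟩
  have hopen : IsOpen (Function.support (fun x => f x ^ 2) ∩ Ω) :=
    (f.continuous.pow 2).isOpen_support.inter hΩ
  refine ⟨f, hf, ?_⟩
  rw [setIntegral_pos_iff_support_of_nonneg_ae (Eventually.of_forall fun x => sq_nonneg _) hint]
  exact hopen.measure_pos μ ⟨x₀, hpos⟩

end TestFunction

/-! ### Variational characterizations -/

section Rayleigh

lemma le_sInf_rayleigh_iff {X : Type*} {P : X → Prop} {Q N : X → ℝ} (hQ : ∀ u, 0 ≤ Q u)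
    (hN : ∀ u, 0 ≤ N u) (hne : ∃ u, P u ∧ 0 < N u) {Λ : ℝ} :
    Λ ≤ sInf {r | ∃ u, P u ∧ 0 < N u ∧ r = Q u / N u} ↔ ∀ u, P u → Λ * N u ≤ Q u := by
  have hbdd : BddBelow {r | ∃ u, P u ∧ 0 < N u ∧ r = Q u / N u} := by
    refine ⟨0, ?_⟩
    rintro _ ⟨u, -, -, rfl⟩
    exact div_nonneg (hQ u) (hN u)
  obtain ⟨u₀, hu₀, hN₀⟩ := hne
  rw [le_csInf_iff hbdd ⟨_, u₀, hu₀, hN₀, rfl⟩]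
  constructor
  · intro h u hu
    rcases (hN u).eq_or_lt with h0 | hpos
    · rw [← h0, mul_zero]
      exact hQ u
    · exact (le_div_iff₀ hpos).1 (h _ ⟨u, hu, hpos, rfl⟩)
  · rintro h _ ⟨u, hu, hpos, rfl⟩
    exact (le_div_iff₀ hpos).2 (h u hu)

/-- The squared `L²`-norm on the half-line `t > 0`. -/
def halfLineNormSq (v : ℝ → ℂ) : ℝ := ∫ t in Ioi (0 : ℝ), ‖v t‖ ^ 2

/-- The quadratic form of the Neumann realization of `-d²/dt² + V` on the half-line `t > 0`. -/
def halfLineEnergy (V : ℝ → ℝ) (v : ℝ → ℂ) : ℝ :=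
  ∫ t in Ioi (0 : ℝ), ‖deriv v t‖ ^ 2 + V t * ‖v t‖ ^ 2

lemma halfLineNormSq_nonneg (v : ℝ → ℂ) : 0 ≤ halfLineNormSq v :=
  integral_nonneg fun _ => sq_nonneg _

lemma halfLineEnergy_nonneg {V : ℝ → ℝ} (hV : ∀ t, 0 ≤ V t) (v : ℝ → ℂ) :
    0 ≤ halfLineEnergy V v :=
  integral_nonneg fun t => add_nonneg (sq_nonneg _) (mul_nonneg (hV t) (sq_nonneg _))

lemma halfLineEnergy_add_const {V : ℝ → ℝ} (hV : Continuous V) (κ : ℝ) {v : ℝ → ℂ}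
    (hv : IsTestFunction v) :
    halfLineEnergy (fun t => V t + κ) v = halfLineEnergy V v + κ * halfLineNormSq v := by
  rw [halfLineEnergy, halfLineEnergy, halfLineNormSq, ← integral_const_mul, ← integral_add]
  · simp only [add_mul, add_assoc]
  · exact (hv.deriv.integrable_norm_sq.add (hv.integrable_mul_norm_sq hV)).integrableOn
  · exact (hv.integrable_norm_sq.const_mul κ).integrableOn

lemma le_deGennes_iff {Λ η : ℝ} : Λ ≤ deGennes η ↔ ∀ v : ℝ → ℂ, IsTestFunction v →
    Λ * halfLineNormSq v ≤ halfLineEnergy (fun t => (t - η) ^ 2) v := by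
  obtain ⟨f, hf, hpos⟩ := exists_isTestFunction_setIntegral_sq_pos volume
    (isOpen_Ioi (a := (0 : ℝ))) nonempty_Ioi
  rw [← le_sInf_rayleigh_iff (halfLineEnergy_nonneg fun t => sq_nonneg (t - η))
    halfLineNormSq_nonneg ⟨_, hf.ofReal, by simpa [halfLineNormSq] using hpos⟩]
  simp only [deGennes, isTestFunction_iff, and_assoc, halfLineNormSq, halfLineEnergy]

lemma deGennes_nonneg (η : ℝ) : 0 ≤ deGennes η :=
  le_deGennes_iff.2 fun v _ => by
    rw [zero_mul]
    exact halfLineEnergy_nonneg (fun t => sq_nonneg (t - η)) v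

lemma norm2D_nonneg (Ω : Set (ℝ × ℝ)) (u : ℝ × ℝ → ℂ) : 0 ≤ norm2D Ω u :=
  integral_nonneg fun _ => sq_nonneg _

lemma energy2D_nonneg (Ω : Set (ℝ × ℝ)) (b1 b2 b3 τ : ℝ) (u : ℝ × ℝ → ℂ) :
    0 ≤ energy2D Ω b1 b2 b3 τ u :=
  integral_nonneg fun _ => by positivity

lemma le_specInf2D_iff {Ω : Set (ℝ × ℝ)} (hΩ : IsOpen Ω) (hne : Ω.Nonempty) {b1 b2 b3 τ Λ : ℝ} :
    Λ ≤ specInf2D Ω b1 b2 b3 τ ↔ ∀ u : ℝ × ℝ → ℂ, IsTestFunction u →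
      Λ * norm2D Ω u ≤ energy2D Ω b1 b2 b3 τ u := by
  obtain ⟨f, hf, hpos⟩ := exists_isTestFunction_setIntegral_sq_pos volume hΩ hne
  rw [← le_sInf_rayleigh_iff (energy2D_nonneg Ω b1 b2 b3 τ) (norm2D_nonneg Ω)
    ⟨_, hf.ofReal, by simpa [norm2D] using hpos⟩]
  simp only [specInf2D, isTestFunction_iff, and_assoc]

end Rayleigh

/-! ### Integrals depending on a parameter -/

section ParametricIntegral

variable {E : Type*} [NormedAddCommGroup E] [NormedSpace ℝ E]

-- The integral is the value at `0` of the convolution of `g p` with the constant function `1`.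
lemma contDiff_integral_of_eqOn_compl_zero {P G : Type*} [NormedAddCommGroup P]
    [NormedSpace ℝ P] [NormedAddCommGroup G] [NormedSpace ℝ G] [MeasurableSpace G] [BorelSpace G]
    {μ : Measure G} [IsLocallyFiniteMeasure μ] [μ.IsAddLeftInvariant] [μ.IsNegInvariant]
    {n : ℕ∞} {g : P → G → E} {k : Set G} (hk : IsCompact k) (hgk : ∀ p, ∀ x ∉ k, g p x = 0)
    (hg : ContDiff ℝ n ↿g) :
    ContDiff ℝ n (fun p => ∫ x, g p x ∂μ) := by
  have h := contDiffOn_convolution_left_with_param (μ := μ)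
    (ContinuousLinearMap.lsmul ℝ ℝ : ℝ →L[ℝ] E →L[ℝ] E).flip isOpen_univ hk
    (fun p x _ => hgk p x) (locallyIntegrable_const (1 : ℝ)) hg.contDiffOn
  rw [univ_prod_univ, contDiffOn_univ] at h
  simpa only [Function.comp_def, convolution, ContinuousLinearMap.flip_apply,
    ContinuousLinearMap.lsmul_apply, one_smul, id]
    using h.comp (contDiff_id.prodMk (contDiff_const (c := 0)))

lemma hasDerivAt_integral_of_eqOn_compl_zero {X : Type*} [TopologicalSpace X] [T2Space X]
    [MeasurableSpace X] [BorelSpace X] {μ : Measure X} [IsFiniteMeasureOnCompacts μ]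
    {g g' : ℝ → X → E} {k : Set X} (hk : IsCompact k) (hgk : ∀ t, ∀ x ∉ k, g t x = 0)
    (hg : Continuous ↿g) (hg' : Continuous ↿g')
    (hderiv : ∀ t x, HasDerivAt (fun t => g t x) (g' t x) t) (t : ℝ) :
    HasDerivAt (fun t => ∫ x, g t x ∂μ) (∫ x, g' t x ∂μ) t := by
  have hgk' : ∀ t, ∀ x ∉ k, g' t x = 0 := fun t x hx =>
    (hderiv t x).unique <| by simpa only [hgk _ x hx] using hasDerivAt_const t (0 : E)
  have hcont : ∀ t, Continuous (g t) := fun t => hg.comp (.prodMk_right t)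
  have hcont' : ∀ t, Continuous (g' t) := fun t => hg'.comp (.prodMk_right t)
  obtain ⟨C, hC⟩ := ((isCompact_closedBall t 1).prod hk).exists_bound_of_continuousOn
    hg'.continuousOn
  refine (hasDerivAt_integral_of_dominated_loc_of_deriv_le (Metric.closedBall_mem_nhds t one_pos)
    (bound := k.indicator fun _ => C) (.of_forall fun t => ?_) ?_ ?_
    (.of_forall fun x s hs => ?_) ?_ (.of_forall fun x s _ => hderiv s x)).2
  · exact ((hcont t).integrable_of_hasCompactSupport (.intro hk (hgk t))).aestronglyMeasurable
  · exact (hcont t).integrable_of_hasCompactSupport (.intro hk (hgk t))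
  · exact ((hcont' t).integrable_of_hasCompactSupport (.intro hk (hgk' t))).aestronglyMeasurable
  · by_cases hx : x ∈ k
    · rw [indicator_of_mem hx]
      exact hC (s, x) ⟨hs, hx⟩
    · simp only [indicator_of_notMem hx, hgk' s x hx, norm_zero, le_refl]
  · exact (integrable_indicator_iff hk.measurableSet).2 (integrableOn_const hk.measure_lt_top.ne)

end ParametricIntegral

/-! ### The partial Fourier transform -/

section PartialFourier

variable {V F H : Type*} [NormedAddCommGroup V] [InnerProductSpace ℝ V] [NormedAddCommGroup F]
  [NormedSpace ℝ F] [NormedAddCommGroup H] [InnerProductSpace ℂ H] {g : V × F → H}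

lemma contDiff_fourierChar {n : ℕ∞} : ContDiff ℝ n (fun x : ℝ => (Real.fourierChar x : ℂ)) := by
  simp only [Real.fourierChar_apply]
  exact (((Complex.ofRealCLM.contDiff).comp (contDiff_const.mul contDiff_id)).mul
    contDiff_const).cexp

lemma IsTestFunction.contDiff_fourierChar_smul (hg : IsTestFunction g) :
    ContDiff ℝ ∞ (fun q : (V × F) × V =>
      (Real.fourierChar (-inner ℝ q.2 q.1.1) : ℂ) • g (q.2, q.1.2)) :=
  (contDiff_fourierChar.comp
      (contDiff_snd.inner ℝ (contDiff_fst.comp contDiff_fst)).neg).smul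
    (hg.contDiff.comp (contDiff_snd.prodMk (contDiff_snd.comp contDiff_fst)))

variable [MeasurableSpace V] [BorelSpace V] [FiniteDimensional ℝ V]

/-- The Fourier transform of `g : V × T → H` in its first variable. -/
def partialFourier {T : Type*} (g : V × T → H) (ξ : V) (t : T) : H := 𝓕 (fun s => g (s, t)) ξ

lemma partialFourier_eq_integral {T : Type*} (g : V × T → H) (ξ : V) (t : T) :
    partialFourier g ξ t = ∫ s, (Real.fourierChar (-inner ℝ s ξ) : ℂ) • g (s, t) :=
  Real.fourier_eq _ _

lemma IsTestFunction.contDiff_partialFourier (hg : IsTestFunction g) :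
    ContDiff ℝ ∞ ↿(partialFourier g) := by
  have hK : IsCompact (Prod.fst '' tsupport g) :=
    hg.hasCompactSupport.isCompact.image continuous_fst
  convert contDiff_integral_of_eqOn_compl_zero (μ := volume) hK (n := ⊤)
    (g := fun (p : V × F) s => (Real.fourierChar (-inner ℝ s p.1) : ℂ) • g (s, p.2))
    (fun p s hs => ?_) hg.contDiff_fourierChar_smul using 2 with p
  · exact partialFourier_eq_integral g p.1 p.2
  · rw [eq_zero_of_notMem_image_fst_tsupport s p.2 hs, smul_zero]

lemma IsTestFunction.partialFourier (hg : IsTestFunction g) (ξ : V) :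
    IsTestFunction (partialFourier g ξ) where
  contDiff := hg.contDiff_partialFourier.comp (contDiff_const.prodMk contDiff_id)
  hasCompactSupport := by
    refine .intro (hg.hasCompactSupport.isCompact.image continuous_snd) fun t ht => ?_
    have h0 : ∀ s, g (s, t) = 0 := fun s =>
      image_eq_zero_of_notMem_tsupport fun h => ht ⟨_, h, rfl⟩
    simp only [partialFourier_eq_integral, h0, smul_zero, integral_zero]

lemma hasDerivAt_partialFourier {g : V × ℝ → H} (hg : IsTestFunction g) (ξ : V) (t : ℝ) :
    HasDerivAt (partialFourier g ξ) (partialFourier (fun p => fderiv ℝ g p (0, 1)) ξ t) t := by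
  have hK : IsCompact (Prod.fst '' tsupport g) :=
    hg.hasCompactSupport.isCompact.image continuous_fst
  have hcont : ∀ {f : V × ℝ → H}, IsTestFunction f →
      Continuous fun q : ℝ × V => (Real.fourierChar (-inner ℝ q.2 ξ) : ℂ) • f (q.2, q.1) :=
    fun hf => hf.contDiff_fourierChar_smul.continuous.comp
      ((continuous_const.prodMk continuous_fst).prodMk continuous_snd)
  have hslice : ∀ t s, HasDerivAt (fun t => g (s, t)) (fderiv ℝ g (s, t) (0, 1)) t := fun t s =>
    (hg.differentiable (s, t)).hasFDerivAt.comp_hasDerivAt t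
      ((hasDerivAt_const t s).prodMk (hasDerivAt_id t))
  simp only [funext (partialFourier_eq_integral _ ξ)]
  exact hasDerivAt_integral_of_eqOn_compl_zero hK
    (fun t s hs => by rw [eq_zero_of_notMem_image_fst_tsupport s t hs, smul_zero])
    (hcont hg) (hcont (hg.fderiv_apply (0, 1))) (fun t s => (hslice t s).fun_const_smul _) t

section Plancherel

lemma IsTestFunction.integrable_norm_sq_fourier {f : V → H} (hf : IsTestFunction f) :
    Integrable (fun ξ => ‖𝓕 f ξ‖ ^ 2) :=
  ((𝓕 (hf.hasCompactSupport.toSchwartzMap hf.contDiff)).memLp 2 volume).integrable_norm_pow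
    two_ne_zero

variable [CompleteSpace H]

lemma IsTestFunction.integral_norm_sq_fourier {f : V → H} (hf : IsTestFunction f) :
    ∫ ξ, ‖𝓕 f ξ‖ ^ 2 = ∫ s, ‖f s‖ ^ 2 :=
  SchwartzMap.integral_norm_sq_fourier (hf.hasCompactSupport.toSchwartzMap hf.contDiff)

variable [MeasurableSpace F] [BorelSpace F] {ν : Measure F} [IsFiniteMeasureOnCompacts ν]
  [SFinite ν] {W : F → ℝ}

lemma integrable_mul_norm_sq_partialFourier (hg : IsTestFunction g) (hW : Continuous W) :
    Integrable (fun p : V × F => W p.2 * ‖partialFourier g p.1 p.2‖ ^ 2) (volume.prod ν) := by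
  have hcont : Continuous (fun p : V × F => W p.2 * ‖partialFourier g p.1 p.2‖ ^ 2) :=
    (hW.comp continuous_snd).mul (hg.contDiff_partialFourier.continuous.norm.pow 2)
  rw [integrable_prod_iff' hcont.aestronglyMeasurable]
  refine ⟨.of_forall fun t => (hg.slice t).integrable_norm_sq_fourier.const_mul (W t), ?_⟩
  have hint : Integrable (fun p : V × F => ‖W p.2‖ * ‖g p‖ ^ 2) (volume.prod ν) :=
    hg.integrable_mul_norm_sq (hW.comp continuous_snd).norm
  convert hint.integral_prod_right using 2 with t
  simp only [norm_mul, norm_pow, norm_norm, integral_const_mul]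
  exact congrArg _ (hg.slice t).integral_norm_sq_fourier

lemma integral_mul_norm_sq_partialFourier (hg : IsTestFunction g) (hW : Continuous W) :
    ∫ p : V × F, W p.2 * ‖partialFourier g p.1 p.2‖ ^ 2 ∂(volume.prod ν)
      = ∫ p : V × F, W p.2 * ‖g p‖ ^ 2 ∂(volume.prod ν) := by
  rw [integral_prod_symm _ (integrable_mul_norm_sq_partialFourier hg hW),
    integral_prod_symm _ (hg.integrable_mul_norm_sq (W := fun p => W p.2)
      (hW.comp continuous_snd))]
  refine integral_congr_ae (.of_forall fun t => ?_)
  simp only [integral_const_mul]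
  exact congrArg _ (hg.slice t).integral_norm_sq_fourier

lemma integrable_norm_sq_partialFourier (hg : IsTestFunction g) :
    Integrable (fun p : V × F => ‖partialFourier g p.1 p.2‖ ^ 2) (volume.prod ν) := by
  simpa only [one_mul] using
    integrable_mul_norm_sq_partialFourier (ν := ν) hg (continuous_const (y := 1))

lemma integral_norm_sq_partialFourier (hg : IsTestFunction g) :
    ∫ p : V × F, ‖partialFourier g p.1 p.2‖ ^ 2 ∂(volume.prod ν)
      = ∫ p : V × F, ‖g p‖ ^ 2 ∂(volume.prod ν) := by
  simpa only [one_mul] using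
    integral_mul_norm_sq_partialFourier (ν := ν) hg (continuous_const (y := 1))

end Plancherel

lemma partialFourier_fderiv_fst {g : ℝ × F → H} (hg : IsTestFunction g) (ξ : ℝ) (t : F) :
    partialFourier (fun p => fderiv ℝ g p (1, 0)) ξ t
      = (2 * π * Complex.I * ξ) • partialFourier g ξ t := by
  have hslice : deriv (fun s => g (s, t)) = fun s => fderiv ℝ g (s, t) (1, 0) := funext fun s =>
    ((hg.differentiable (s, t)).hasFDerivAt.comp_hasDerivAt s
      ((hasDerivAt_id s).prodMk (hasDerivAt_const s t))).deriv
  have h := Real.fourier_deriv (hg.slice t).integrable (hg.slice t).differentiable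
    (hg.slice t).deriv.integrable
  exact (congrArg (fun f : ℝ → H => 𝓕 f ξ) hslice).symm.trans (congrFun h ξ)

lemma partialFourier_covDeriv_fst (a : F → ℝ) {w : ℝ × F → ℂ} (hw : IsTestFunction w) (ξ : ℝ)
    (t : F) :
    partialFourier (fun p => -Complex.I * fderiv ℝ w p (1, 0) - a p.2 * w p) ξ t
      = ((2 * π * ξ - a t : ℝ) : ℂ) * partialFourier w ξ t := by
  have hconv : ∀ {f : ℝ × F → ℂ}, IsTestFunction f →
      Integrable fun s => (Real.fourierChar (-inner ℝ s ξ) : ℂ) • f (s, t) := fun hf =>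
    (Real.fourierIntegral_convergent_iff ξ).2 (hf.slice t).integrable
  calc
    _ = -Complex.I * partialFourier (fun p => fderiv ℝ w p (1, 0)) ξ t
          - a t * partialFourier w ξ t := by
      simp only [partialFourier_eq_integral, ← integral_const_mul]
      rw [← integral_sub ((hconv (hw.fderiv_apply (1, 0))).const_mul _) ((hconv hw).const_mul _)]
      refine integral_congr_ae (.of_forall fun s => ?_)
      simp only [smul_eq_mul]
      ring
    _ = _ := by
      rw [partialFourier_fderiv_fst hw, smul_eq_mul]
      push_cast
      linear_combination (-2 * π * ξ * partialFourier w ξ t) * Complex.I_sq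

end PartialFourier

/-! ### Magnetic forms and gauge covariance -/

section Gauge

variable {E F : Type*} [NormedAddCommGroup E] [NormedSpace ℝ E] [NormedAddCommGroup F]
  [NormedSpace ℝ F]

/-- The covariant derivative `(-i∇ - A)u` attached to a magnetic potential (a `1`-form) `A`. -/
def covDeriv (A : E → E →L[ℝ] ℝ) (u : E → ℂ) (x : E) : E →L[ℝ] ℂ :=
  -Complex.I • fderiv ℝ u x - (A x).smulRight (u x)

/-- Pull-back along `L` followed by multiplication by the phase `exp (iφ)`. -/
def gaugeTransform (L : E ≃L[ℝ] F) (φ : E → ℝ) (u : F → ℂ) (p : E) : ℂ :=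
  Complex.exp (φ p * Complex.I) * u (L p)

variable {L : E ≃L[ℝ] F} {φ : E → ℝ}

lemma norm_gaugeTransform (u : F → ℂ) (p : E) : ‖gaugeTransform L φ u p‖ = ‖u (L p)‖ := by
  rw [gaugeTransform, norm_mul, Complex.norm_exp_ofReal_mul_I, one_mul]

lemma IsTestFunction.gaugeTransform {u : F → ℂ} (hu : IsTestFunction u) (hφ : ContDiff ℝ ∞ φ) :
    IsTestFunction (gaugeTransform L φ u) :=
  (hu.comp_continuousLinearEquiv L).mul_left
    ((Complex.ofRealCLM.contDiff.comp hφ).mul contDiff_const).cexp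

lemma covDeriv_gaugeTransform {A : F → F →L[ℝ] ℝ} {A' : E → E →L[ℝ] ℝ} {u : F → ℂ} {p : E}
    (hφ : HasFDerivAt φ (A' p - (A (L p)).comp (L : E →L[ℝ] F)) p)
    (hu : DifferentiableAt ℝ u (L p)) :
    covDeriv A' (gaugeTransform L φ u) p
      = Complex.exp (φ p * Complex.I) • (covDeriv A u (L p)).comp (L : E →L[ℝ] F) := by
  have hexp := ((Complex.ofRealCLM.hasFDerivAt.comp p hφ).mul_const Complex.I).cexp
  have hL := hu.hasFDerivAt.comp p L.hasFDerivAt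
  have hgauge : HasFDerivAt (gaugeTransform L φ u) _ p := hexp.mul hL
  rw [covDeriv, covDeriv, hgauge.fderiv]
  ext x
  simp only [Function.comp_apply, Complex.ofRealCLM_apply, ContinuousLinearMap.comp_sub, smul_add,
    neg_smul, gaugeTransform, sub_apply, add_apply, neg_apply, smul_apply,
    ContinuousLinearMap.comp_apply, ContinuousLinearEquiv.coe_coe, smul_eq_mul,
    ContinuousLinearMap.smulRight_apply, Complex.real_smul, ContinuousLinearMap.sub_comp,
    ContinuousLinearMap.smul_comp, neg_mul]
  linear_combination (-Complex.exp (φ p * Complex.I) * u (L p) *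
    ((A' p x : ℂ) - A (L p) (L x))) * Complex.I_sq

/-- The squared Hilbert–Schmidt norm of a differential on the plane; it is not the square of the
operator norm, `ℝ × ℝ` carrying the supremum norm. -/
def gradNormSq (D : ℝ × ℝ →L[ℝ] ℂ) : ℝ := ‖D (1, 0)‖ ^ 2 + ‖D (0, 1)‖ ^ 2

lemma gradNormSq_smul (c : ℂ) (D : ℝ × ℝ →L[ℝ] ℂ) :
    gradNormSq (c • D) = ‖c‖ ^ 2 * gradNormSq D := by
  simp only [gradNormSq, _root_.smul_apply, smul_eq_mul, norm_mul, mul_pow, mul_add]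

/-- The quadratic form of the Neumann realization of `(-i∇ - A)² + V` on the planar domain `Ω`. -/
def magneticEnergy (Ω : Set (ℝ × ℝ)) (A : ℝ × ℝ → ℝ × ℝ →L[ℝ] ℝ) (V : ℝ × ℝ → ℝ)
    (u : ℝ × ℝ → ℂ) : ℝ :=
  ∫ x in Ω, gradNormSq (covDeriv A u x) + V x * ‖u x‖ ^ 2

/-- The bound `(-i∇ - A)² + V ≥ Λ` for the Neumann realization on `Ω`, in the form sense. -/
def IsMagneticLowerBound (Ω : Set (ℝ × ℝ)) (A : ℝ × ℝ → ℝ × ℝ →L[ℝ] ℝ) (V : ℝ × ℝ → ℝ)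
    (Λ : ℝ) : Prop :=
  ∀ u : ℝ × ℝ → ℂ, IsTestFunction u → Λ * norm2D Ω u ≤ magneticEnergy Ω A V u

variable {Ω : Set (ℝ × ℝ)} {L : (ℝ × ℝ) ≃L[ℝ] ℝ × ℝ} {φ V : ℝ × ℝ → ℝ}
  {A A' : ℝ × ℝ → ℝ × ℝ →L[ℝ] ℝ} {Λ : ℝ}

lemma setIntegral_preimage_continuousLinearEquiv (hL : MeasurePreserving L) (f : ℝ × ℝ → ℝ) :
    ∫ p in L ⁻¹' Ω, f (L p) = ∫ x in Ω, f x :=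
  hL.setIntegral_preimage_emb L.toHomeomorph.measurableEmbedding f Ω

lemma norm2D_gaugeTransform (hL : MeasurePreserving L) (u : ℝ × ℝ → ℂ) :
    norm2D (L ⁻¹' Ω) (gaugeTransform L φ u) = norm2D Ω u := by
  simp only [norm2D, norm_gaugeTransform]
  exact setIntegral_preimage_continuousLinearEquiv hL fun x => ‖u x‖ ^ 2

lemma magneticEnergy_gaugeTransform (hL : MeasurePreserving L)
    (hLD : ∀ D, gradNormSq (D.comp (L : ℝ × ℝ →L[ℝ] ℝ × ℝ)) = gradNormSq D)
    (hφ : ∀ p, HasFDerivAt φ (A' p - (A (L p)).comp (L : ℝ × ℝ →L[ℝ] ℝ × ℝ)) p)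
    {u : ℝ × ℝ → ℂ} (hu : Differentiable ℝ u) :
    magneticEnergy (L ⁻¹' Ω) A' (fun p => V (L p)) (gaugeTransform L φ u)
      = magneticEnergy Ω A V u := by
  have hgrad : ∀ p, gradNormSq (covDeriv A' (gaugeTransform L φ u) p)
      = gradNormSq (covDeriv A u (L p)) := fun p => by
    rw [covDeriv_gaugeTransform (hφ p) (hu _), gradNormSq_smul, Complex.norm_exp_ofReal_mul_I,
      one_pow, one_mul, hLD]
  simp only [magneticEnergy, hgrad, norm_gaugeTransform]
  exact setIntegral_preimage_continuousLinearEquiv hL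
    fun x => gradNormSq (covDeriv A u x) + V x * ‖u x‖ ^ 2

lemma IsMagneticLowerBound.of_preimage (hL : MeasurePreserving L)
    (hLD : ∀ D, gradNormSq (D.comp (L : ℝ × ℝ →L[ℝ] ℝ × ℝ)) = gradNormSq D)
    (hφs : ContDiff ℝ ∞ φ)
    (hφ : ∀ p, HasFDerivAt φ (A' p - (A (L p)).comp (L : ℝ × ℝ →L[ℝ] ℝ × ℝ)) p)
    (h : IsMagneticLowerBound (L ⁻¹' Ω) A' (fun p => V (L p)) Λ) :
    IsMagneticLowerBound Ω A V Λ := fun u hu => by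
  rw [← norm2D_gaugeTransform hL, ← magneticEnergy_gaugeTransform hL hLD hφ hu.differentiable]
  exact h _ (hu.gaugeTransform hφs)

lemma isMagneticLowerBound_preimage_iff (hL : MeasurePreserving L)
    (hLD : ∀ D, gradNormSq (D.comp (L : ℝ × ℝ →L[ℝ] ℝ × ℝ)) = gradNormSq D)
    (hφs : ContDiff ℝ ∞ φ)
    (hφ : ∀ p, HasFDerivAt φ (A' p - (A (L p)).comp (L : ℝ × ℝ →L[ℝ] ℝ × ℝ)) p) :
    IsMagneticLowerBound (L ⁻¹' Ω) A' (fun p => V (L p)) Λ ↔ IsMagneticLowerBound Ω A V Λ := by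
  refine ⟨.of_preimage hL hLD hφs hφ, fun h => ?_⟩
  have hpre : L.symm ⁻¹' (L ⁻¹' Ω) = Ω := by
    ext; simp
  refine .of_preimage (L := L.symm) (φ := fun q => -φ (L.symm q)) (A' := A)
    (hL.symm L.toHomeomorph.toMeasurableEquiv) (fun D => ?_)
    (hφs.comp L.symm.contDiff).neg (fun q => ?_) ?_
  · rw [← hLD, ContinuousLinearMap.comp_assoc, ContinuousLinearEquiv.coe_symm_comp_coe,
      ContinuousLinearMap.comp_id]
  · refine ((hφ (L.symm q)).comp q L.symm.hasFDerivAt).neg.congr_fderiv ?_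
    ext <;> simp
  · simpa only [hpre, L.apply_symm_apply] using h

end Gauge

/-! ### Reflections of the plane -/

section Reflection

lemma measurePreserving_of_involutive {E : Type*} [NormedAddCommGroup E] [NormedSpace ℝ E]
    [MeasurableSpace E] [BorelSpace E] [FiniteDimensional ℝ E] (μ : Measure E) [μ.IsAddHaarMeasure]
    {L : E →L[ℝ] E} (hL : Function.Involutive L) : MeasurePreserving L μ μ := by
  have hcomp : (L : E →ₗ[ℝ] E) ∘ₗ L = LinearMap.id := LinearMap.ext hL
  have hdet : LinearMap.det (L : E →ₗ[ℝ] E) * LinearMap.det (L : E →ₗ[ℝ] E) = 1 := by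
    rw [← LinearMap.det_comp, hcomp, LinearMap.det_id]
  have habs : |(LinearMap.det (L : E →ₗ[ℝ] E))⁻¹| = 1 := by
    rcases mul_self_eq_one_iff.1 hdet with h | h <;> simp [h]
  refine ⟨L.continuous.measurable, ?_⟩
  have hmap := Measure.map_linearMap_addHaar_eq_smul_addHaar μ (left_ne_zero_of_mul_eq_one hdet)
  rwa [habs, ENNReal.ofReal_one, one_smul] at hmap

/-- The orthogonal reflection `(s, t) ↦ s (cos θ, sin θ) + t (sin θ, -cos θ)`, whose mirror makes
the angle `θ / 2` with the first axis. -/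
def planeReflection (θ : ℝ) : (ℝ × ℝ) ≃L[ℝ] ℝ × ℝ :=
  let R : ℝ × ℝ →L[ℝ] ℝ × ℝ :=
    (cos θ • ContinuousLinearMap.fst ℝ ℝ ℝ + sin θ • ContinuousLinearMap.snd ℝ ℝ ℝ).prod
      (sin θ • ContinuousLinearMap.fst ℝ ℝ ℝ - cos θ • ContinuousLinearMap.snd ℝ ℝ ℝ)
  have hR : Function.Involutive R := fun p => by
    ext
    · simp only [ContinuousLinearMap.prod_apply, add_apply, smul_apply, smul_eq_mul,
        ContinuousLinearMap.coe_fst', ContinuousLinearMap.coe_snd', sub_apply, R]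
      linear_combination p.1 * sin_sq_add_cos_sq θ
    · simp only [ContinuousLinearMap.prod_apply, add_apply, smul_apply, smul_eq_mul,
        ContinuousLinearMap.coe_fst', ContinuousLinearMap.coe_snd', sub_apply, R]
      linear_combination p.2 * sin_sq_add_cos_sq θ
  .equivOfInverse R R hR hR

lemma planeReflection_apply (θ : ℝ) (p : ℝ × ℝ) :
    planeReflection θ p = (cos θ * p.1 + sin θ * p.2, sin θ * p.1 - cos θ * p.2) :=
  rfl

lemma measurePreserving_planeReflection (θ : ℝ) : MeasurePreserving (planeReflection θ) :=
  measurePreserving_of_involutive (L := (planeReflection θ : ℝ × ℝ →L[ℝ] ℝ × ℝ)) volume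
    (planeReflection θ).left_inv

lemma gradNormSq_comp_planeReflection (θ : ℝ) (D : ℝ × ℝ →L[ℝ] ℂ) :
    gradNormSq (D.comp (planeReflection θ : ℝ × ℝ →L[ℝ] ℝ × ℝ)) = gradNormSq D := by
  have h₁ : planeReflection θ (1, 0) = cos θ • (1, 0) + sin θ • (0, 1) := by
    simp [planeReflection_apply]
  have h₂ : planeReflection θ (0, 1) = sin θ • (1, 0) - cos θ • (0, 1) := by
    simp [planeReflection_apply]
  simp only [gradNormSq, ContinuousLinearMap.comp_apply, ContinuousLinearEquiv.coe_coe, h₁, h₂,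
    map_add, map_sub, map_smul, Complex.sq_norm, Complex.normSq_apply, Complex.add_re,
    Complex.add_im, Complex.sub_re, Complex.sub_im, Complex.smul_re, Complex.smul_im, smul_eq_mul]
  linear_combination ((D (1, 0)).re ^ 2 + (D (1, 0)).im ^ 2 + (D (0, 1)).re ^ 2 +
    (D (0, 1)).im ^ 2) * sin_sq_add_cos_sq θ

/-- The half-plane `{(s, t) : t > 0}`. -/
def halfPlane : Set (ℝ × ℝ) := univ ×ˢ Ioi 0

lemma planeReflection_preimage_hpUp {α : ℝ} (hα : 0 < cos (α / 2)) :
    planeReflection (α / 2) ⁻¹' hpUp α = halfPlane := by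
  ext p
  have hnormal : (cos (α / 2) * p.1 + sin (α / 2) * p.2) * sin (α / 2)
      - (sin (α / 2) * p.1 - cos (α / 2) * p.2) * cos (α / 2) = p.2 := by
    linear_combination p.2 * sin_sq_add_cos_sq (α / 2)
  simp only [halfPlane, hpUp, planeReflection_apply, mem_preimage, mem_ofPred_eq, mem_prod,
    mem_univ, true_and, mem_Ioi]
  rw [Real.tan_eq_sin_div_cos, ← mul_div_assoc, lt_div_iff₀ hα, ← sub_pos, hnormal]

end Reflection

/-! ### The half-plane model -/

section HalfPlane

/-- The potential `(s, t) ↦ (a t, 0)`; for linear `a` it is the Landau gauge of a constant magnetic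
field. -/
def landauPotential (a : ℝ → ℝ) (p : ℝ × ℝ) : ℝ × ℝ →L[ℝ] ℝ :=
  a p.2 • ContinuousLinearMap.fst ℝ ℝ ℝ

lemma gradNormSq_covDeriv_landauPotential (a : ℝ → ℝ) (u : ℝ × ℝ → ℂ) (p : ℝ × ℝ) :
    gradNormSq (covDeriv (landauPotential a) u p)
      = ‖-Complex.I * fderiv ℝ u p (1, 0) - a p.2 * u p‖ ^ 2 + ‖fderiv ℝ u p (0, 1)‖ ^ 2 := by
  simp [gradNormSq, covDeriv, landauPotential]

lemma energy2D_eq_magneticEnergy (Ω : Set (ℝ × ℝ)) (b1 b2 b3 τ : ℝ) (u : ℝ × ℝ → ℂ) :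
    energy2D Ω b1 b2 b3 τ u = magneticEnergy Ω (landauPotential fun t => -(t * b3))
      (fun x => (x.1 * b2 - x.2 * b1 - τ) ^ 2) u := by
  simp only [energy2D, magneticEnergy, gradNormSq_covDeriv_landauPotential, Complex.ofReal_neg,
    neg_mul, sub_neg_eq_add]

-- A reflection reverses the orientation, hence the sign of the magnetic field `c`; the quadratic
-- phase brings the reflected potential back to Landau gauge.
lemma isMagneticLowerBound_hpUp_iff {α : ℝ} (hα : 0 < cos (α / 2)) {c σ τ Λ : ℝ} :
    IsMagneticLowerBound (hpUp α) (landauPotential fun t => -(t * c))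
        (fun x => (x.1 * (σ * sin (α / 2)) - x.2 * (σ * cos (α / 2)) - τ) ^ 2) Λ
      ↔ IsMagneticLowerBound halfPlane (landauPotential fun t => t * c)
        (fun p => (p.2 * σ - τ) ^ 2) Λ := by
  set θ := α / 2
  let φ : ℝ × ℝ → ℝ := fun p =>
    c * (sin θ ^ 2 * (p.1 * p.2) + sin θ * cos θ / 2 * (p.1 ^ 2 - p.2 ^ 2))
  have hφ : ∀ p, HasFDerivAt φ (landauPotential (fun t => t * c) p -
      (landauPotential (fun t => -(t * c)) (planeReflection θ p)).comp
        (planeReflection θ : ℝ × ℝ →L[ℝ] ℝ × ℝ)) p := fun p => by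
    have h₁ : HasFDerivAt (fun q : ℝ × ℝ => q.1) (.fst ℝ ℝ ℝ) p := hasFDerivAt_fst
    have h₂ : HasFDerivAt (fun q : ℝ × ℝ => q.2) (.snd ℝ ℝ ℝ) p := hasFDerivAt_snd
    refine ((((h₁.mul h₂).const_mul (sin θ ^ 2)).add
      (((h₁.pow 2).sub (h₂.pow 2)).const_mul (sin θ * cos θ / 2))).const_mul c).congr_fderiv ?_
    refine ContinuousLinearMap.ext fun q => ?_
    simp only [landauPotential, planeReflection_apply, add_apply, sub_apply, smul_apply,
      ContinuousLinearMap.smul_comp, ContinuousLinearMap.comp_apply,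
      ContinuousLinearEquiv.coe_coe, ContinuousLinearMap.coe_fst', ContinuousLinearMap.coe_snd',
      smul_eq_mul, smul_add, nsmul_eq_mul, Nat.cast_ofNat, Nat.add_one_sub_one, pow_one, neg_mul,
      sub_neg_eq_add]
    linear_combination (c * p.2 * q.1) * sin_sq_add_cos_sq θ
  have hV : ∀ p : ℝ × ℝ, (planeReflection θ p).1 * (σ * sin θ)
      - (planeReflection θ p).2 * (σ * cos θ) - τ = p.2 * σ - τ := fun p => by
    simp only [planeReflection_apply]
    linear_combination (p.2 * σ) * sin_sq_add_cos_sq θ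
  rw [← isMagneticLowerBound_preimage_iff (measurePreserving_planeReflection θ)
    (gradNormSq_comp_planeReflection θ) (by fun_prop) hφ, planeReflection_preimage_hpUp hα]
  simp only [hV]

lemma isMagneticLowerBound_halfPlane_sub_const_iff {a : ℝ → ℝ} {V : ℝ × ℝ → ℝ} {Λ : ℝ} (ξ : ℝ) :
    IsMagneticLowerBound halfPlane (landauPotential fun t => a t - ξ) V Λ
      ↔ IsMagneticLowerBound halfPlane (landauPotential a) V Λ :=
  (isMagneticLowerBound_preimage_iff (L := .refl ℝ (ℝ × ℝ)) (φ := fun p => -(ξ * p.1)) (.id volume)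
    (fun _ => rfl) (by fun_prop) fun p =>
      ((hasFDerivAt_fst.const_mul ξ).neg).congr_fderiv (by ext <;> simp [landauPotential]))

end HalfPlane

section Fibers

variable {a W : ℝ → ℝ} {w : ℝ × ℝ → ℂ} {Λ : ℝ}

lemma volume_restrict_halfPlane :
    (volume : Measure (ℝ × ℝ)).restrict halfPlane = volume.prod (volume.restrict (Ioi 0)) := by
  rw [halfPlane, Measure.volume_eq_prod, ← Measure.prod_restrict, Measure.restrict_univ]

lemma integrable_halfLineNormSq_partialFourier (hw : IsTestFunction w) :
    Integrable (fun ξ => halfLineNormSq (partialFourier w ξ)) :=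
  (integrable_norm_sq_partialFourier (ν := volume.restrict (Ioi 0)) hw).integral_prod_left

lemma norm2D_halfPlane (hw : IsTestFunction w) :
    norm2D halfPlane w = ∫ ξ, halfLineNormSq (partialFourier w ξ) := by
  rw [norm2D, volume_restrict_halfPlane, ← integral_norm_sq_partialFourier hw,
    integral_prod _ (integrable_norm_sq_partialFourier hw)]
  rfl

lemma IsTestFunction.covDeriv_fst (hw : IsTestFunction w) (ha : ContDiff ℝ ∞ a) :
    IsTestFunction (fun p => -Complex.I * fderiv ℝ w p (1, 0) - a p.2 * w p) :=
  ((hw.fderiv_apply (1, 0)).mul_left contDiff_const).sub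
    (hw.mul_left (Complex.ofRealCLM.contDiff.comp (ha.comp contDiff_snd)))

lemma norm_sq_deriv_partialFourier_add (hw : IsTestFunction w) (ξ t : ℝ) :
    ‖deriv (partialFourier w ξ) t‖ ^ 2
        + ((2 * π * ξ - a t) ^ 2 + W t) * ‖partialFourier w ξ t‖ ^ 2
      = ‖partialFourier (fun p => -Complex.I * fderiv ℝ w p (1, 0) - a p.2 * w p) ξ t‖ ^ 2
        + ‖partialFourier (fun p => fderiv ℝ w p (0, 1)) ξ t‖ ^ 2
        + W t * ‖partialFourier w ξ t‖ ^ 2 := by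
  rw [(hasDerivAt_partialFourier hw ξ t).deriv, partialFourier_covDeriv_fst a hw, norm_mul,
    mul_pow, Complex.norm_real, Real.norm_eq_abs, sq_abs]
  ring

lemma integrable_norm_sq_deriv_partialFourier_add (hw : IsTestFunction w) (ha : ContDiff ℝ ∞ a)
    (hW : Continuous W) :
    Integrable (fun p : ℝ × ℝ => ‖deriv (partialFourier w p.1) p.2‖ ^ 2
        + ((2 * π * p.1 - a p.2) ^ 2 + W p.2) * ‖partialFourier w p.1 p.2‖ ^ 2)
      (volume.prod (volume.restrict (Ioi 0))) := by
  simp only [norm_sq_deriv_partialFourier_add hw]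
  exact ((integrable_norm_sq_partialFourier (hw.covDeriv_fst ha)).add
    (integrable_norm_sq_partialFourier (hw.fderiv_apply (0, 1)))).add
      (integrable_mul_norm_sq_partialFourier hw hW)

lemma integrable_halfLineEnergy_partialFourier (hw : IsTestFunction w) (ha : ContDiff ℝ ∞ a)
    (hW : Continuous W) :
    Integrable (fun ξ => halfLineEnergy (fun t => (2 * π * ξ - a t) ^ 2 + W t)
      (partialFourier w ξ)) :=
  (integrable_norm_sq_deriv_partialFourier_add hw ha hW).integral_prod_left

lemma magneticEnergy_halfPlane (hw : IsTestFunction w) (ha : ContDiff ℝ ∞ a) (hW : Continuous W) :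
    magneticEnergy halfPlane (landauPotential a) (fun p => W p.2) w
      = ∫ ξ, halfLineEnergy (fun t => (2 * π * ξ - a t) ^ 2 + W t) (partialFourier w ξ) := by
  have hadd {f g h : ℝ × ℝ → ℝ} {μ : Measure (ℝ × ℝ)} (hf : Integrable f μ) (hg : Integrable g μ)
      (hh : Integrable h μ) :
      ∫ p, f p + g p + h p ∂μ = (∫ p, f p ∂μ) + (∫ p, g p ∂μ) + ∫ p, h p ∂μ := by
    rw [integral_add (f := fun p => f p + g p) (hf.add hg) hh, integral_add hf hg]
  have h₁ := hw.covDeriv_fst ha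
  have h₂ := hw.fderiv_apply (0, 1)
  simp only [magneticEnergy, halfLineEnergy, volume_restrict_halfPlane,
    gradNormSq_covDeriv_landauPotential]
  rw [← integral_prod _ (integrable_norm_sq_deriv_partialFourier_add hw ha hW)]
  simp only [norm_sq_deriv_partialFourier_add hw]
  rw [hadd h₁.integrable_norm_sq h₂.integrable_norm_sq
      (hw.integrable_mul_norm_sq (W := fun p => W p.2) (hW.comp continuous_snd)),
    hadd (integrable_norm_sq_partialFourier h₁) (integrable_norm_sq_partialFourier h₂)
      (integrable_mul_norm_sq_partialFourier hw hW),
    integral_norm_sq_partialFourier h₁, integral_norm_sq_partialFourier h₂,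
    integral_mul_norm_sq_partialFourier hw hW]

lemma isMagneticLowerBound_halfPlane_of_fibers (ha : ContDiff ℝ ∞ a) (hW : Continuous W)
    (h : ∀ (ξ : ℝ) (v : ℝ → ℂ), IsTestFunction v →
      Λ * halfLineNormSq v ≤ halfLineEnergy (fun t => (ξ - a t) ^ 2 + W t) v) :
    IsMagneticLowerBound halfPlane (landauPotential a) (fun p => W p.2) Λ := fun w hw => by
  rw [norm2D_halfPlane hw, magneticEnergy_halfPlane hw ha hW, ← integral_const_mul]
  exact integral_mono ((integrable_halfLineNormSq_partialFourier hw).const_mul Λ)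
    (integrable_halfLineEnergy_partialFourier hw ha hW)
    fun ξ => h (2 * π * ξ) _ (hw.partialFourier ξ)

end Fibers

/-! ### Slowly varying trial states -/

section TrialStates

lemma exists_isTestFunction_integral_deriv_sq_le {ε : ℝ} (hε : 0 < ε) :
    ∃ χ : ℝ → ℝ, IsTestFunction χ ∧ 0 < ∫ s, χ s ^ 2 ∧
      ∫ s, deriv χ s ^ 2 ≤ ε * ∫ s, χ s ^ 2 := by
  obtain ⟨χ, hχ, hpos⟩ := exists_isTestFunction_setIntegral_sq_pos (volume : Measure ℝ)
    isOpen_univ univ_nonempty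
  rw [Measure.restrict_univ] at hpos
  set X := ∫ s, χ s ^ 2
  set Y := ∫ s, deriv χ s ^ 2
  obtain ⟨r, hr, hrε⟩ : ∃ r : ℝ, 0 < r ∧ r ^ 2 * Y ≤ ε * X := by
    have hY : 0 < Y + 1 :=
      add_pos_of_nonneg_of_pos (integral_nonneg fun s => sq_nonneg _) one_pos
    have hratio : 0 < ε * X / (Y + 1) := div_pos (mul_pos hε hpos) hY
    refine ⟨√(ε * X / (Y + 1)), Real.sqrt_pos.2 hratio, ?_⟩
    rw [Real.sq_sqrt hratio.le, div_mul_eq_mul_div, div_le_iff₀ hY]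
    gcongr
    linarith
  have hscale (f : ℝ → ℝ) : ∫ s, f (r * s) ^ 2 = r⁻¹ * ∫ s, f s ^ 2 := by
    rw [Measure.integral_comp_mul_left (fun s => f s ^ 2), abs_of_pos (inv_pos.2 hr), smul_eq_mul]
  have hderiv (s : ℝ) : deriv (fun s => χ (r * s)) s = r * deriv χ (r * s) := by
    simpa using deriv_comp_mul_left r χ s
  refine ⟨fun s => χ (r * s), ⟨hχ.contDiff.comp (by fun_prop),
    hχ.hasCompactSupport.comp_homeomorph (Homeomorph.mulLeft₀ r hr.ne')⟩, ?_, ?_⟩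
  · rw [hscale]
    positivity
  · calc ∫ s, deriv (fun s => χ (r * s)) s ^ 2
        = r⁻¹ * (r ^ 2 * Y) := by
          simp only [hderiv, mul_pow, integral_const_mul, hscale (deriv χ)]
          ring
      _ ≤ r⁻¹ * (ε * X) := by gcongr
      _ = ε * ∫ s, χ (r * s) ^ 2 := by
          rw [hscale]
          ring

variable {a W : ℝ → ℝ} {χ : ℝ → ℝ} {v : ℝ → ℂ} {Λ : ℝ}

lemma norm2D_halfPlane_mul :
    norm2D halfPlane (fun p => χ p.1 * v p.2) = (∫ s, χ s ^ 2) * halfLineNormSq v := by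
  simp only [norm2D, halfLineNormSq, volume_restrict_halfPlane, ← integral_prod_mul, norm_mul,
    mul_pow, Complex.norm_real, Real.norm_eq_abs, sq_abs]

lemma gradNormSq_covDeriv_landauPotential_mul (hχ : IsTestFunction χ) (hv : IsTestFunction v)
    (p : ℝ × ℝ) :
    gradNormSq (covDeriv (landauPotential a) (fun p => χ p.1 * v p.2) p)
      = χ p.1 ^ 2 * (‖deriv v p.2‖ ^ 2 + a p.2 ^ 2 * ‖v p.2‖ ^ 2)
        + deriv χ p.1 ^ 2 * ‖v p.2‖ ^ 2 := by
  have hderiv : HasFDerivAt (fun p : ℝ × ℝ => (χ p.1 : ℂ) * v p.2) _ p :=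
    (((hχ.differentiable p.1).hasDerivAt.ofReal_comp).hasFDerivAt.comp p hasFDerivAt_fst).mul
      ((hv.differentiable p.2).hasDerivAt.hasFDerivAt.comp p hasFDerivAt_snd)
  have hfst : fderiv ℝ (fun p : ℝ × ℝ => (χ p.1 : ℂ) * v p.2) p (1, 0)
      = deriv χ p.1 * v p.2 := by
    rw [hderiv.fderiv]
    simp [mul_comm]
  have hsnd : fderiv ℝ (fun p : ℝ × ℝ => (χ p.1 : ℂ) * v p.2) p (0, 1)
      = χ p.1 * deriv v p.2 := by
    rw [hderiv.fderiv]
    simp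
  have hcov : -Complex.I * (deriv χ p.1 * v p.2) - a p.2 * (χ p.1 * v p.2)
      = -(((a p.2 * χ p.1 : ℝ) + (deriv χ p.1 : ℝ) * Complex.I) * v p.2) := by
    push_cast
    ring
  rw [gradNormSq_covDeriv_landauPotential, hfst, hsnd, hcov, norm_neg, norm_mul, norm_mul, mul_pow,
    mul_pow, Complex.norm_real, Real.norm_eq_abs, sq_abs, Complex.sq_norm, Complex.normSq_add_mul_I]
  ring

lemma magneticEnergy_halfPlane_mul (ha : Continuous a) (hW : Continuous W)
    (hχ : IsTestFunction χ) (hv : IsTestFunction v) :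
    magneticEnergy halfPlane (landauPotential a) (fun p => W p.2) (fun p => χ p.1 * v p.2)
      = (∫ s, χ s ^ 2) * halfLineEnergy (fun t => a t ^ 2 + W t) v
        + (∫ s, deriv χ s ^ 2) * halfLineNormSq v := by
  have hsq {f : ℝ → ℝ} (hf : IsTestFunction f) : Integrable fun s => f s ^ 2 := by
    simpa only [Real.norm_eq_abs, sq_abs] using hf.integrable_norm_sq (μ := volume)
  have hv₁ : IntegrableOn (fun t => ‖deriv v t‖ ^ 2 + (a t ^ 2 + W t) * ‖v t‖ ^ 2) (Ioi 0) :=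
    (hv.deriv.integrable_norm_sq.add
      (hv.integrable_mul_norm_sq ((ha.pow 2).add hW))).integrableOn
  have hv₂ : IntegrableOn (fun t => ‖v t‖ ^ 2) (Ioi 0) := hv.integrable_norm_sq.integrableOn
  rw [magneticEnergy, volume_restrict_halfPlane, halfLineEnergy, halfLineNormSq,
    ← integral_prod_mul, ← integral_prod_mul,
    ← integral_add ((hsq hχ).mul_prod hv₁) ((hsq hχ.deriv).mul_prod hv₂)]
  refine integral_congr_ae (.of_forall fun p => ?_)
  simp only [gradNormSq_covDeriv_landauPotential_mul hχ hv, norm_mul, mul_pow, Complex.norm_real,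
    Real.norm_eq_abs, sq_abs]
  ring

lemma IsMagneticLowerBound.le_halfLineEnergy (ha : Continuous a) (hW : Continuous W)
    (h : IsMagneticLowerBound halfPlane (landauPotential a) (fun p => W p.2) Λ)
    (hv : IsTestFunction v) :
    Λ * halfLineNormSq v ≤ halfLineEnergy (fun t => a t ^ 2 + W t) v := by
  have hN := halfLineNormSq_nonneg v
  refine le_of_forall_pos_le_add fun ε hε => ?_
  have hδ : 0 < ε / (halfLineNormSq v + 1) := by positivity
  obtain ⟨χ, hχ, hX, hY⟩ := exists_isTestFunction_integral_deriv_sq_le hδ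
  have hδε : ε / (halfLineNormSq v + 1) * halfLineNormSq v ≤ ε := by
    rw [div_mul_eq_mul_div, div_le_iff₀ (by positivity)]
    gcongr
    linarith
  have htrial := h _ (hχ.ofReal.mul_prod hv)
  rw [norm2D_halfPlane_mul, magneticEnergy_halfPlane_mul ha hW hχ hv] at htrial
  refine le_of_mul_le_mul_left ?_ hX
  calc (∫ s, χ s ^ 2) * (Λ * halfLineNormSq v)
      = Λ * ((∫ s, χ s ^ 2) * halfLineNormSq v) := by ring
    _ ≤ (∫ s, χ s ^ 2) * halfLineEnergy (fun t => a t ^ 2 + W t) v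
          + (∫ s, deriv χ s ^ 2) * halfLineNormSq v := htrial
    _ ≤ (∫ s, χ s ^ 2) * halfLineEnergy (fun t => a t ^ 2 + W t) v
          + ε / (halfLineNormSq v + 1) * (∫ s, χ s ^ 2) * halfLineNormSq v := by gcongr
    _ = (∫ s, χ s ^ 2) * (halfLineEnergy (fun t => a t ^ 2 + W t) v
          + ε / (halfLineNormSq v + 1) * halfLineNormSq v) := by ring
    _ ≤ (∫ s, χ s ^ 2) * (halfLineEnergy (fun t => a t ^ 2 + W t) v + ε) := by gcongr

lemma isMagneticLowerBound_halfPlane_iff (ha : ContDiff ℝ ∞ a) (hW : Continuous W) :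
    IsMagneticLowerBound halfPlane (landauPotential a) (fun p => W p.2) Λ ↔
      ∀ (ξ : ℝ) (v : ℝ → ℂ), IsTestFunction v →
        Λ * halfLineNormSq v ≤ halfLineEnergy (fun t => (ξ - a t) ^ 2 + W t) v := by
  refine ⟨fun h ξ v hv => ?_, isMagneticLowerBound_halfPlane_of_fibers ha hW⟩
  simp only [sub_sq_comm ξ]
  exact ((isMagneticLowerBound_halfPlane_sub_const_iff ξ).2 h).le_halfLineEnergy
    (ha.continuous.sub continuous_const) hW hv

end TrialStates

/-! ### Reduction to the de Gennes operator -/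

section DeGennes

lemma forall_le_halfLineEnergy_iff_le_deGennes_add {c σ : ℝ} (hcσ : c ^ 2 + σ ^ 2 = 1)
    {ξ τ Λ : ℝ} :
    (∀ v : ℝ → ℂ, IsTestFunction v →
        Λ * halfLineNormSq v ≤ halfLineEnergy (fun t => (ξ - t * c) ^ 2 + (t * σ - τ) ^ 2) v)
      ↔ Λ ≤ deGennes (ξ * c + τ * σ) + (ξ * σ - τ * c) ^ 2 := by
  have hsquare (t : ℝ) : (ξ - t * c) ^ 2 + (t * σ - τ) ^ 2
      = (t - (ξ * c + τ * σ)) ^ 2 + (ξ * σ - τ * c) ^ 2 := by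
    linear_combination (t ^ 2 - ξ ^ 2 - τ ^ 2) * hcσ
  rw [← sub_le_iff_le_add, le_deGennes_iff]
  refine forall₂_congr fun v hv => ?_
  simp only [hsquare]
  rw [halfLineEnergy_add_const (by fun_prop) _ hv, sub_mul, sub_le_iff_le_add]

end DeGennes

end MagWedge

open MagWedge in
theorem specInf_hpUp_eq_general (α γ τ : ℝ) (hα : 0 < Real.cos (α / 2)) :
    specInf2D (hpUp α)
        (Real.sin γ * Real.cos (α / 2)) (Real.sin γ * Real.sin (α / 2)) (Real.cos γ) τ
      = ⨅ ξ : ℝ, (deGennes (ξ * Real.cos γ + τ * Real.sin γ)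
          + (ξ * Real.sin γ - τ * Real.cos γ) ^ 2) := by
  have hopen : IsOpen (hpUp α) :=
    isOpen_lt continuous_snd (continuous_fst.mul continuous_const)
  have hne : (hpUp α).Nonempty := ⟨(0, -1), by simp [hpUp]⟩
  have hbdd : BddBelow (range fun ξ : ℝ => deGennes (ξ * Real.cos γ + τ * Real.sin γ)
      + (ξ * Real.sin γ - τ * Real.cos γ) ^ 2) :=
    ⟨0, forall_mem_range.2 fun ξ => add_nonneg (deGennes_nonneg _) (sq_nonneg _)⟩
  refine eq_of_forall_le_iff fun Λ => ?_
  rw [le_specInf2D_iff hopen hne, le_ciInf_iff hbdd]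
  simp only [energy2D_eq_magneticEnergy,
    ← forall_le_halfLineEnergy_iff_le_deGennes_add (cos_sq_add_sin_sq γ)]
  exact (isMagneticLowerBound_hpUp_iff hα).trans
    (isMagneticLowerBound_halfPlane_iff (a := fun t => t * cos γ)
      (W := fun t => (t * sin γ - τ) ^ 2) (by fun_prop) (by fun_prop))

open MagWedge in
/-- the bottom of the spectrum on the upper half-plane `Hp^up`. -/
theorem specInf_hpUp_eq (α γ τ : ℝ) (hα : α ∈ Set.Ioo 0 π) (hγ : γ ∈ Set.Icc 0 (π / 2)) :
    specInf2D (hpUp α)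
        (Real.sin γ * Real.cos (α / 2)) (Real.sin γ * Real.sin (α / 2)) (Real.cos γ) τ
      = ⨅ ξ : ℝ, (deGennes (ξ * Real.cos γ + τ * Real.sin γ)
          + (ξ * Real.sin γ - τ * Real.cos γ) ^ 2) := by
  have hcos : 0 < Real.cos (α / 2) :=
    cos_pos_of_mem_Ioo ⟨by linarith [hα.1, pi_pos], by linarith [hα.2]⟩
  exact specInf_hpUp_eq_general α γ τ hcos
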